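/- Assume in addition L = ℓ − k > 0. Then there exist δ > 0 and a neighborhood U₁ ⊆ ℝ² of (0,0) such that for every (α, β) ∈ U₁: (a) if β > β₁(α), then f_{α,β} has no zeros in (−δ, δ); (b) if β = β₁(α), then f_{α,β} has exactly one zero x* in (−δ, δ), namely x* = x(α), and f_{α,β}'(x*) = 0 with f_{α,β}''(x*) > 0; (c) if β < β₁(α), then f_{α,β} has exactly two zeros x⁻ < x⁺ in (−δ, δ), with f_{α,β}'(x⁻) < 0 and f_{α,β}'(x⁺) > 0; moreover, writing ε = β − β₁(α) < 0, these zeros satisfy x^± = −(k/L)·α ± √(−ε/L) + O(|α|·√(−ε)) + O(α²) + O(|ε|). -/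

import Mathlib

/-!
Write `c = x(α)` and `ε = β - β₁(α)`. Uniformly for small `(α, β)`, the function `f = f_{α,β}` has
a critical point at `c` with critical value `ε`, and `f'' = 2L + O(|α| + |x|)` is close to `2L > 0`.
Hence `f` decreases before `c`, increases after it, and is squeezed between two parabolas:
`|f(x) - ε - L (x - c)²| ≤ K (x - c)²` whenever `|f'' - 2L| ≤ K` between `c` and `x`.
With `K = L / 2` this counts the zeros and shows that each lies within `2r` of `c`, where
`r = √(-ε / L)`. With `K = O(|α| + |x - c|)` at a zero `x`, it gives
`|x - c| = r + O(|α| r) + O(r²)`.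
-/

open Set Filter Topology
open scoped ContDiff

section Calculus

lemma differentiableAt_deriv_of_contDiffAt_two {f : ℝ → ℝ} {x : ℝ} (hf : ContDiffAt ℝ 2 f x) :
    DifferentiableAt ℝ (deriv f) x :=
  (hf.derivWithin (m := 1) (by norm_num)).differentiableAt one_ne_zero

lemma abs_sub_sub_mul_le_of_abs_deriv_sub_le {f : ℝ → ℝ} {a K c x : ℝ}
    (hf : ∀ y ∈ uIcc c x, DifferentiableAt ℝ f y)
    (hK : ∀ y ∈ uIcc c x, |deriv f y - a| ≤ K) :
    |f x - f c - a * (x - c)| ≤ K * |x - c| := by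
  have hderiv : ∀ y ∈ uIcc c x, HasDerivWithinAt (fun z ↦ f z - a * z) (deriv f y - a)
      (uIcc c x) y := fun y hy ↦ by
    simpa using ((hf y hy).hasDerivAt.fun_sub ((hasDerivAt_id' y).const_mul a)).hasDerivWithinAt
  have hmean := (convex_uIcc c x).norm_image_sub_le_of_norm_hasDerivWithin_le hderiv hK
    left_mem_uIcc right_mem_uIcc
  calc |f x - f c - a * (x - c)| = |f x - a * x - (f c - a * c)| := by ring_nf
    _ ≤ K * |x - c| := hmean

lemma abs_sub_taylor_two_le_of_abs_deriv_deriv_sub_le {f : ℝ → ℝ} {a K c x : ℝ}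
    (hf : ∀ y ∈ uIcc c x, ContDiffAt ℝ 2 f y)
    (hK : ∀ y ∈ uIcc c x, |deriv (deriv f) y - a| ≤ K) :
    |f x - f c - deriv f c * (x - c) - a / 2 * (x - c) ^ 2| ≤ K * (x - c) ^ 2 := by
  have hK0 : 0 ≤ K := (abs_nonneg _).trans (hK c left_mem_uIcc)
  have hderiv : ∀ y ∈ uIcc c x, HasDerivWithinAt
      (fun z ↦ f z - deriv f c * (z - c) - a / 2 * (z - c) ^ 2)
      (deriv f y - deriv f c - a * (y - c)) (uIcc c x) y := fun y hy ↦ by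
    have hlin := (hasDerivAt_id' y).sub_const c
    have hfy := ((hf y hy).differentiableAt two_ne_zero).hasDerivAt
    refine HasDerivAt.hasDerivWithinAt ?_
    convert (hfy.fun_sub (hlin.const_mul (deriv f c))).fun_sub
      ((hlin.fun_pow 2).const_mul (a / 2)) using 1
    norm_num
    ring
  have hbound : ∀ y ∈ uIcc c x, |deriv f y - deriv f c - a * (y - c)| ≤ K * |x - c| :=
    fun y hy ↦ by
    have hsub : uIcc c y ⊆ uIcc c x := uIcc_subset_uIcc_left hy
    calc |deriv f y - deriv f c - a * (y - c)| ≤ K * |y - c| :=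
          abs_sub_sub_mul_le_of_abs_deriv_sub_le
            (fun z hz ↦ differentiableAt_deriv_of_contDiffAt_two (hf z (hsub hz)))
            (fun z hz ↦ hK z (hsub hz))
      _ ≤ K * |x - c| := by gcongr K * ?_; exact abs_sub_left_of_mem_uIcc hy
  have hmean := (convex_uIcc c x).norm_image_sub_le_of_norm_hasDerivWithin_le hderiv hbound
    left_mem_uIcc right_mem_uIcc
  calc |f x - f c - deriv f c * (x - c) - a / 2 * (x - c) ^ 2|
      ≤ K * |x - c| * |x - c| := by
        simp only [Real.norm_eq_abs, sub_self, mul_zero, zero_pow two_ne_zero, sub_zero] at hmean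
        convert hmean using 2
        ring
    _ = K * (x - c) ^ 2 := by rw [mul_assoc, abs_mul_abs_self, sq]

lemma exists_forall_eq_iff_of_strictAntiOn_of_strictMonoOn {X Y : Type*}
    [ConditionallyCompleteLinearOrder X] [TopologicalSpace X] [OrderTopology X] [DenselyOrdered X]
    [LinearOrder Y] [TopologicalSpace Y] [OrderClosedTopology Y]
    {g : X → Y} {s : Set X} {c u v : X} {e : Y} (hs : s.OrdConnected) (hg : ContinuousOn g s)
    (hanti : StrictAntiOn g (s ∩ Iic c)) (hmono : StrictMonoOn g (s ∩ Ici c))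
    (hc : c ∈ s) (hu : u ∈ s) (hv : v ∈ s) (huc : u ≤ c) (hcv : c ≤ v)
    (hce : g c < e) (heu : e ≤ g u) (hev : e ≤ g v) :
    ∃ x₁ ∈ s ∩ Iio c, ∃ x₂ ∈ s ∩ Ioi c, ∀ x ∈ s, g x = e ↔ x = x₁ ∨ x = x₂ := by
  have hsu : Icc u c ⊆ s := hs.out hu hc
  have hsv : Icc c v ⊆ s := hs.out hc hv
  obtain ⟨x₁, hx₁, rfl⟩ := intermediate_value_Icc' huc (hg.mono hsu) ⟨hce.le, heu⟩
  obtain ⟨x₂, hx₂, h₂₁⟩ := intermediate_value_Icc hcv (hg.mono hsv) ⟨hce.le, hev⟩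
  have hx₁c : x₁ < c := hx₁.2.lt_of_ne (by rintro rfl; exact hce.false)
  have hcx₂ : c < x₂ := hx₂.1.lt_of_ne (by rintro rfl; exact hce.ne h₂₁)
  refine ⟨x₁, ⟨hsu hx₁, hx₁c⟩, x₂, ⟨hsv hx₂, hcx₂⟩, fun x hx ↦ ⟨fun hxe ↦ ?_, ?_⟩⟩
  · rcases le_total x c with hxc | hcx
    · exact .inl (hanti.injOn ⟨hx, hxc⟩ ⟨hsu hx₁, hx₁.2⟩ hxe)
    · exact .inr (hmono.injOn ⟨hx, hcx⟩ ⟨hsv hx₂, hx₂.1⟩ (hxe.trans h₂₁.symm))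
  · rintro (rfl | rfl)
    exacts [rfl, h₂₁]

lemma mul_abs_sub_sqrt_le_of_abs_sub_le {e K L y : ℝ} (hL : 0 < L) (he : 0 ≤ e) (hy : 0 < y)
    (h : |e - L * y ^ 2| ≤ K * y ^ 2) : L * |y - √(e / L)| ≤ K * y := by
  have hsq : L * √(e / L) ^ 2 = e := by rw [Real.sq_sqrt (by positivity)]; field_simp
  refine le_of_mul_le_mul_right ?_ hy
  calc L * |y - √(e / L)| * y ≤ L * |y - √(e / L)| * (y + √(e / L)) := by
        gcongr; exact le_add_of_nonneg_right (Real.sqrt_nonneg _)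
    _ = |L * (y - √(e / L)) * (y + √(e / L))| := by
        rw [abs_mul, abs_mul, abs_of_pos hL, abs_of_nonneg (by positivity : 0 ≤ y + √(e / L))]
    _ = |e - L * y ^ 2| := by rw [abs_sub_comm]; nth_rw 3 [← hsq]; ring_nf
    _ ≤ K * y * y := by rwa [mul_assoc, ← sq]

lemma tendsto_zero_of_abs_sub_le {X : Type*} {l : Filter X} {u p q : X → ℝ}
    (hp : Tendsto p l (𝓝 0)) (hq : Tendsto q l (𝓝 0)) (h : ∀ᶠ a in l, |u a - p a| ≤ q a) :
    Tendsto u l (𝓝 0) := by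
  simpa using (squeeze_zero_norm' h hq).add hp

end Calculus

/-- On the interval `s`, the `C²` function `g` has a nondegenerate minimum at its critical point
`c`, with second derivative `2 * L` up to a relative error of at most one quarter. The critical
value `g c` is left free, so that its sign decides the number of zeros of `g`. -/
structure IsQuadraticWell (g : ℝ → ℝ) (L c : ℝ) (s : Set ℝ) : Prop where
  pos : 0 < L
  ordConnected : s.OrdConnected
  mem : c ∈ s
  contDiffAt : ∀ x ∈ s, ContDiffAt ℝ 2 g x
  deriv_eq_zero : deriv g c = 0
  abs_deriv_deriv_sub_le : ∀ x ∈ s, |deriv (deriv g) x - 2 * L| ≤ L / 2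

namespace IsQuadraticWell

variable {g : ℝ → ℝ} {L c x : ℝ} {s : Set ℝ}

lemma uIcc_subset (h : IsQuadraticWell g L c s) (hx : x ∈ s) : uIcc c x ⊆ s :=
  h.ordConnected.uIcc_subset h.mem hx

lemma abs_deriv_sub_le (h : IsQuadraticWell g L c s) (hx : x ∈ s) :
    |deriv g x - 2 * L * (x - c)| ≤ L / 2 * |x - c| := by
  have hsub := h.uIcc_subset hx
  simpa only [h.deriv_eq_zero, sub_zero] using abs_sub_sub_mul_le_of_abs_deriv_sub_le
    (fun y hy ↦ differentiableAt_deriv_of_contDiffAt_two (h.contDiffAt y (hsub hy)))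
    (fun y hy ↦ h.abs_deriv_deriv_sub_le y (hsub hy))

lemma abs_sub_sub_le {K : ℝ} (h : IsQuadraticWell g L c s) (hx : x ∈ s)
    (hK : ∀ y ∈ uIcc c x, |deriv (deriv g) y - 2 * L| ≤ K) :
    |g x - g c - L * (x - c) ^ 2| ≤ K * (x - c) ^ 2 := by
  simpa [h.deriv_eq_zero] using abs_sub_taylor_two_le_of_abs_deriv_deriv_sub_le
    (fun y hy ↦ h.contDiffAt y (h.uIcc_subset hx hy)) hK

lemma add_half_mul_sq_le (h : IsQuadraticWell g L c s) (hx : x ∈ s) :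
    g c + L / 2 * (x - c) ^ 2 ≤ g x := by
  have hparabola := h.abs_sub_sub_le hx
    fun y hy ↦ h.abs_deriv_deriv_sub_le y (h.uIcc_subset hx hy)
  linarith [neg_le_of_abs_le hparabola]

lemma apply_center_le (h : IsQuadraticWell g L c s) (hx : x ∈ s) : g c ≤ g x := by
  have := h.pos
  exact (le_add_of_nonneg_right (by positivity)).trans (h.add_half_mul_sq_le hx)

lemma apply_eq_apply_center_iff (h : IsQuadraticWell g L c s) (hx : x ∈ s) : g x = g c ↔ x = c := by
  refine ⟨fun hgx ↦ ?_, fun hxc ↦ hxc ▸ rfl⟩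
  by_contra hne
  have hsq : 0 < L / 2 * (x - c) ^ 2 :=
    mul_pos (half_pos h.pos) (sq_pos_of_ne_zero (sub_ne_zero.2 hne))
  linarith [h.add_half_mul_sq_le hx]

lemma deriv_pos (h : IsQuadraticWell g L c s) (hx : x ∈ s) (hcx : c < x) : 0 < deriv g x := by
  have habs := neg_le_of_abs_le (h.abs_deriv_sub_le hx)
  rw [abs_of_pos (sub_pos.2 hcx)] at habs
  linarith [mul_pos h.pos (sub_pos.2 hcx)]

lemma deriv_neg (h : IsQuadraticWell g L c s) (hx : x ∈ s) (hxc : x < c) : deriv g x < 0 := by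
  have habs := le_of_abs_le (h.abs_deriv_sub_le hx)
  rw [abs_of_neg (sub_neg.2 hxc)] at habs
  linarith [mul_neg_of_pos_of_neg h.pos (sub_neg.2 hxc)]

lemma deriv_deriv_pos (h : IsQuadraticWell g L c s) (hx : x ∈ s) : 0 < deriv (deriv g) x := by
  linarith [neg_le_of_abs_le (h.abs_deriv_deriv_sub_le x hx), h.pos]

lemma continuousOn (h : IsQuadraticWell g L c s) : ContinuousOn g s :=
  fun x hx ↦ (h.contDiffAt x hx).continuousAt.continuousWithinAt

lemma strictMonoOn (h : IsQuadraticWell g L c s) : StrictMonoOn g (s ∩ Ici c) := by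
  refine strictMonoOn_of_deriv_pos (h.ordConnected.inter ordConnected_Ici).convex
    (h.continuousOn.mono inter_subset_left) fun x hx ↦ ?_
  rw [interior_inter, interior_Ici] at hx
  exact h.deriv_pos (interior_subset hx.1) hx.2

lemma strictAntiOn (h : IsQuadraticWell g L c s) : StrictAntiOn g (s ∩ Iic c) := by
  refine strictAntiOn_of_deriv_neg (h.ordConnected.inter ordConnected_Iic).convex
    (h.continuousOn.mono inter_subset_left) fun x hx ↦ ?_
  rw [interior_inter, interior_Iic] at hx
  exact h.deriv_neg (interior_subset hx.1) hx.2

lemma exists_two_zeros {ρ : ℝ} (h : IsQuadraticWell g L c s) (hρ : 0 ≤ ρ)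
    (hs : Icc (c - ρ) (c + ρ) ⊆ s) (hneg : g c < 0) (hle : -g c ≤ L / 2 * ρ ^ 2) :
    ∃ x₁ ∈ s ∩ Iio c, ∃ x₂ ∈ s ∩ Ioi c, ∀ x ∈ s, g x = 0 ↔ x = x₁ ∨ x = x₂ := by
  have hl : c - ρ ∈ s := hs ⟨le_rfl, by linarith⟩
  have hr : c + ρ ∈ s := hs ⟨by linarith, le_rfl⟩
  refine exists_forall_eq_iff_of_strictAntiOn_of_strictMonoOn h.ordConnected h.continuousOn
    h.strictAntiOn h.strictMonoOn h.mem hl hr (by linarith) (by linarith) hneg ?_ ?_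
  · have := h.add_half_mul_sq_le hl
    rw [sub_sub_cancel_left, neg_sq] at this
    linarith
  · have := h.add_half_mul_sq_le hr
    rw [add_sub_cancel_left] at this
    linarith

lemma mul_abs_abs_sub_sub_sqrt_le {K : ℝ} (h : IsQuadraticWell g L c s) (hx : x ∈ s)
    (hgx : g x = 0) (hneg : g c < 0) (hK : ∀ y ∈ uIcc c x, |deriv (deriv g) y - 2 * L| ≤ K) :
    L * |(|x - c|) - √(-g c / L)| ≤ K * |x - c| := by
  have hne : x ≠ c := by rintro rfl; exact hneg.ne hgx
  refine mul_abs_sub_sqrt_le_of_abs_sub_le h.pos (neg_nonneg.2 hneg.le)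
    (abs_pos.2 (sub_ne_zero.2 hne)) ?_
  simpa [hgx, sq_abs] using h.abs_sub_sub_le hx hK

lemma abs_sub_le_two_mul_sqrt (h : IsQuadraticWell g L c s) (hx : x ∈ s) (hgx : g x = 0)
    (hneg : g c < 0) : |x - c| ≤ 2 * √(-g c / L) := by
  have hroot := h.mul_abs_abs_sub_sub_sqrt_le hx hgx hneg
    fun y hy ↦ h.abs_deriv_deriv_sub_le y (h.uIcc_subset hx hy)
  have hL := h.pos
  have : L * (|x - c| - √(-g c / L)) ≤ L * (|x - c| / 2) := by
    calc _ ≤ L * |(|x - c|) - √(-g c / L)| := by gcongr; exact le_abs_self _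
      _ ≤ L / 2 * |x - c| := hroot
      _ = L * (|x - c| / 2) := by ring
  linarith [le_of_mul_le_mul_left this hL]

lemma abs_abs_sub_sub_sqrt_le {A B : ℝ} (h : IsQuadraticWell g L c s) (hA : 0 ≤ A) (hB : 0 ≤ B)
    (hAB : ∀ y ∈ s, |deriv (deriv g) y - 2 * L| ≤ A + B * |y - c|)
    (hx : x ∈ s) (hgx : g x = 0) (hneg : g c < 0) :
    |(|x - c|) - √(-g c / L)| ≤ (2 * A * √(-g c / L) + 4 * B * √(-g c / L) ^ 2) / L := by
  have hroot := h.mul_abs_abs_sub_sub_sqrt_le (K := A + B * |x - c|) hx hgx hneg fun y hy ↦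
    (hAB y (h.uIcc_subset hx hy)).trans (by gcongr A + B * ?_; exact abs_sub_left_of_mem_uIcc hy)
  have hnear := h.abs_sub_le_two_mul_sqrt hx hgx hneg
  rw [le_div_iff₀' h.pos]
  calc _ ≤ (A + B * |x - c|) * |x - c| := hroot
    _ ≤ (A + B * (2 * √(-g c / L))) * (2 * √(-g c / L)) := by gcongr
    _ = 2 * A * √(-g c / L) + 4 * B * √(-g c / L) ^ 2 := by ring

lemma exists_two_simple_zeros {ρ A B c₀ E : ℝ} (h : IsQuadraticWell g L c s)
    (hρ : 0 ≤ ρ) (hs : Icc (c - ρ) (c + ρ) ⊆ s) (hneg : g c < 0) (hle : -g c ≤ L / 2 * ρ ^ 2)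
    (hA : 0 ≤ A) (hB : 0 ≤ B) (hAB : ∀ y ∈ s, |deriv (deriv g) y - 2 * L| ≤ A + B * |y - c|)
    (hE : (2 * A * √(-g c / L) + 4 * B * √(-g c / L) ^ 2) / L + |c - c₀| ≤ E) :
    ∃ x₁ x₂, x₁ < x₂ ∧ x₁ ∈ s ∧ x₂ ∈ s ∧ (∀ x ∈ s, g x = 0 ↔ x = x₁ ∨ x = x₂) ∧
      deriv g x₁ < 0 ∧ 0 < deriv g x₂ ∧
      |x₁ - (c₀ - √(-g c / L))| ≤ E ∧ |x₂ - (c₀ + √(-g c / L))| ≤ E := by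
  obtain ⟨x₁, ⟨hx₁, hx₁c⟩, x₂, ⟨hx₂, hcx₂⟩, hzero⟩ := h.exists_two_zeros hρ hs hneg hle
  have herr₁ := h.abs_abs_sub_sub_sqrt_le hA hB hAB hx₁ ((hzero x₁ hx₁).2 (.inl rfl)) hneg
  have herr₂ := h.abs_abs_sub_sub_sqrt_le hA hB hAB hx₂ ((hzero x₂ hx₂).2 (.inr rfl)) hneg
  rw [abs_of_neg (sub_neg.2 hx₁c : x₁ - c < 0), abs_sub_comm] at herr₁
  rw [abs_of_pos (sub_pos.2 hcx₂ : 0 < x₂ - c)] at herr₂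
  refine ⟨x₁, x₂, hx₁c.trans hcx₂, hx₁, hx₂, hzero, h.deriv_neg hx₁ hx₁c, h.deriv_pos hx₂ hcx₂,
    ?_, ?_⟩
  · calc |x₁ - (c₀ - √(-g c / L))| = |(√(-g c / L) - -(x₁ - c)) + (c - c₀)| := by ring_nf
      _ ≤ E := (abs_add_le _ _).trans ((add_le_add_left herr₁ _).trans hE)
  · calc |x₂ - (c₀ + √(-g c / L))| = |(x₂ - c - √(-g c / L)) + (c - c₀)| := by ring_nf
      _ ≤ E := (abs_add_le _ _).trans ((add_le_add_left herr₂ _).trans hE)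

end IsQuadraticWell

/-- The displacement function `f_{α,β}` of the unfolding, whose zeros are the crossing cycles. -/
def displacement (P Q : ℝ → ℝ) (α β x : ℝ) : ℝ := β + P x - Q (x - α)

section Displacement

variable {P Q : ℝ → ℝ} {α β x k ℓ : ℝ}

lemma displacement_eq_const_add :
    displacement P Q α β = fun x ↦ β + displacement P Q α 0 x := by
  ext x
  simp only [displacement]
  ring

lemma displacement_eq_sub_of_eq_zero {β₁ : ℝ} (h : displacement P Q α β₁ x = 0) (β : ℝ) :
    displacement P Q α β x = β - β₁ := by
  rw [displacement] at h ⊢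
  linarith

lemma deriv_displacement_eq (β β' : ℝ) :
    deriv (displacement P Q α β) = deriv (displacement P Q α β') := by
  rw [displacement_eq_const_add, deriv_const_add', displacement_eq_const_add (β := β'),
    deriv_const_add']

lemma contDiffAt_displacement {n : WithTop ℕ∞} (hP : ContDiffAt ℝ n P x)
    (hQ : ContDiffAt ℝ n Q (x - α)) : ContDiffAt ℝ n (displacement P Q α β) x :=
  (contDiffAt_const.add hP).sub (hQ.comp x (contDiffAt_id.sub contDiffAt_const))

lemma deriv_deriv_displacement (hP : ContDiffAt ℝ 2 P x) (hQ : ContDiffAt ℝ 2 Q (x - α)) :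
    deriv (deriv (displacement P Q α β)) x = deriv (deriv P) x - deriv (deriv Q) (x - α) := by
  have hQα : ContDiffAt ℝ 2 (fun y ↦ Q (y - α)) x :=
    hQ.comp x (contDiffAt_id.sub contDiffAt_const)
  have hsub := iteratedDeriv_fun_sub (n := 2) hP hQα
  rw [iteratedDeriv_comp_sub_const] at hsub
  have hzero : displacement P Q α 0 = fun y ↦ P y - Q (y - α) := by
    ext y
    rw [displacement, zero_add]
  rw [deriv_displacement_eq β 0, hzero]
  simpa [iteratedDeriv_eq_iterate] using hsub

lemma exists_eventually_abs_deriv_deriv_sub_le (hP : ContDiffAt ℝ 3 P 0)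
    (hQ : ContDiffAt ℝ 3 Q 0) :
    ∃ M ≥ 0, ∀ᶠ p : ℝ × ℝ in 𝓝 0, |deriv (deriv P) p.2 - deriv (deriv Q) (p.2 - p.1) -
      (deriv (deriv P) 0 - deriv (deriv Q) 0)| ≤ M * ‖p‖ := by
  have hdd {R : ℝ → ℝ} (hR : ContDiffAt ℝ 3 R 0) : DifferentiableAt ℝ (deriv (deriv R)) 0 :=
    differentiableAt_deriv_of_contDiffAt_two (hR.derivWithin (by norm_num))
  have hdiffP : DifferentiableAt ℝ (fun p : ℝ × ℝ ↦ deriv (deriv P) p.2) 0 :=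
    DifferentiableAt.comp (f := fun p : ℝ × ℝ ↦ p.2) 0 (hdd hP) differentiableAt_snd
  have hdiffQ : DifferentiableAt ℝ (fun p : ℝ × ℝ ↦ deriv (deriv Q) (p.2 - p.1)) 0 :=
    DifferentiableAt.comp (f := fun p : ℝ × ℝ ↦ p.2 - p.1) 0 (by simpa using hdd hQ)
      (differentiableAt_snd.sub differentiableAt_fst)
  obtain ⟨M, hM, hbound⟩ := (hdiffP.fun_sub hdiffQ).isBigO_sub.exists_nonneg
  exact ⟨M, hM, by simpa using hbound.bound⟩

lemma eventually_contDiffAt_snd_and_sub {n : WithTop ℕ∞} (hn : n ≠ ∞)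
    (hP : ContDiffAt ℝ n P 0) (hQ : ContDiffAt ℝ n Q 0) :
    ∀ᶠ p : ℝ × ℝ in 𝓝 0, ContDiffAt ℝ n P p.2 ∧ ContDiffAt ℝ n Q (p.2 - p.1) := by
  have hsnd : Tendsto (fun p : ℝ × ℝ ↦ p.2) (𝓝 0) (𝓝 0) := continuous_snd.tendsto _
  have hsub : Tendsto (fun p : ℝ × ℝ ↦ p.2 - p.1) (𝓝 0) (𝓝 0) := by
    simpa using (continuous_snd.fun_sub continuous_fst).tendsto (0 : ℝ × ℝ)
  exact (hsnd.eventually (hP.eventually hn)).and (hsub.eventually (hQ.eventually hn))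

lemma exists_isQuadraticWell_displacement (hkℓ : k < ℓ)
    (hP : ContDiffAt ℝ 3 P 0) (hQ : ContDiffAt ℝ 3 Q 0)
    (hP2 : deriv (deriv P) 0 = 2 * ℓ) (hQ2 : deriv (deriv Q) 0 = 2 * k) :
    ∃ δ > 0, ∃ M ≥ 0, ∀ α β c, |α| < δ → |c| < δ → deriv (displacement P Q α β) c = 0 →
      IsQuadraticWell (displacement P Q α β) (ℓ - k) c (Ioo (-δ) δ) ∧
      ∀ x ∈ Ioo (-δ) δ, |deriv (deriv (displacement P Q α β)) x - 2 * (ℓ - k)| ≤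
        M * (|α| + |x|) := by
  obtain ⟨M, hM, hbound⟩ := exists_eventually_abs_deriv_deriv_sub_le hP hQ
  have hsmall : ∀ᶠ p : ℝ × ℝ in 𝓝 0, M * ‖p‖ < (ℓ - k) / 2 := by
    have hlim : Tendsto (fun p : ℝ × ℝ ↦ M * ‖p‖) (𝓝 0) (𝓝 0) := by
      simpa using (tendsto_norm_zero (E := ℝ × ℝ)).const_mul M
    exact hlim.eventually_lt_const (by linarith)
  obtain ⟨δ, hδ, hball⟩ := Metric.eventually_nhds_iff.1
    ((eventually_contDiffAt_snd_and_sub (n := 2) (by simp) (hP.of_le (by norm_num))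
      (hQ.of_le (by norm_num))).and (hbound.and hsmall))
  have hnear {α x : ℝ} (hα : |α| < δ) (hx : x ∈ Ioo (-δ) δ) : dist (α, x) (0 : ℝ × ℝ) < δ := by
    rw [dist_zero_right, Prod.norm_def]
    exact max_lt hα (abs_lt.2 hx)
  refine ⟨δ, hδ, M, hM, fun α β c hα hc hcrit ↦ ?_⟩
  have hcurv : ∀ x ∈ Ioo (-δ) δ,
      |deriv (deriv (displacement P Q α β)) x - 2 * (ℓ - k)| ≤ M * ‖(α, x)‖ := fun x hx ↦ by
    obtain ⟨⟨hPx, hQx⟩, hx2, -⟩ := hball (hnear hα hx)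
    rw [deriv_deriv_displacement hPx hQx, mul_sub]
    simpa only [hP2, hQ2] using hx2
  refine ⟨⟨sub_pos.2 hkℓ, ordConnected_Ioo, abs_lt.1 hc, fun x hx ↦ ?_, hcrit,
    fun x hx ↦ (hcurv x hx).trans (hball (hnear hα hx)).2.2.le⟩, fun x hx ↦ ?_⟩
  · obtain ⟨⟨hPx, hQx⟩, -⟩ := hball (hnear hα hx)
    exact contDiffAt_displacement hPx hQx
  · refine (hcurv x hx).trans ?_
    gcongr
    exact max_le_add_of_nonneg (abs_nonneg α) (abs_nonneg x)

end Displacement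

section Unfolding

lemma abs_le_mul_abs_of_abs_add_mul_le {c m α C r : ℝ} (hC : 0 ≤ C) (hα : |α| ≤ r)
    (h : |c + m * α| ≤ C * α ^ 2) : |c| ≤ (|m| + C * r) * |α| :=
  calc |c| = |c + m * α - m * α| := by rw [add_sub_cancel_right]
    _ ≤ |c + m * α| + |m * α| := abs_sub _ _
    _ ≤ C * α ^ 2 + |m| * |α| := by rw [abs_mul]; gcongr
    _ = (|m| + C * |α|) * |α| := by rw [← sq_abs α]; ring
    _ ≤ (|m| + C * r) * |α| := by gcongr

lemma eventually_abs_lt_of_tendsto_zero {u v : ℝ → ℝ} (hu : Tendsto u (𝓝 0) (𝓝 0))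
    (hv : Tendsto v (𝓝 0) (𝓝 0)) {r ρ η : ℝ} (hr : 0 < r) (hρ : 0 < ρ) (hη : 0 < η) :
    ∀ᶠ p : ℝ × ℝ in 𝓝 (0, 0), |p.1| < r ∧ |u p.1| < ρ ∧ |p.2 - v p.1| < η := by
  have hfst : Tendsto (fun p : ℝ × ℝ ↦ p.1) (𝓝 (0, 0)) (𝓝 0) := continuous_fst.tendsto _
  have hsnd : Tendsto (fun p : ℝ × ℝ ↦ p.2) (𝓝 (0, 0)) (𝓝 0) := continuous_snd.tendsto _
  have hlt {w : ℝ × ℝ → ℝ} {t : ℝ} (hw : Tendsto w (𝓝 (0, 0)) (𝓝 0)) (ht : 0 < t) :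
      ∀ᶠ p in 𝓝 (0, 0), |w p| < t := hw.abs.eventually_lt_const (by rwa [abs_zero])
  exact (hlt hfst hr).and ((hlt (hu.comp hfst) hρ).and
    (hlt (by simpa using hsnd.sub (hv.comp hfst)) hη))

lemma sqrt_error_add_le {A B C L α e : ℝ} (hL : 0 < L) (hA : 0 ≤ A) (hB : 0 ≤ B) (hC : 0 ≤ C)
    (he : 0 ≤ e) :
    (2 * (A * |α|) * √(e / L) + 4 * B * √(e / L) ^ 2) / L + C * α ^ 2 ≤
      (2 * A / (L * √L) + C + 4 * B / L ^ 2) * (|α| * √e + α ^ 2 + e) := by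
  have hsplit {a b c x y z : ℝ} (ha : 0 ≤ a) (hb : 0 ≤ b) (hc : 0 ≤ c) (hx : 0 ≤ x) (hy : 0 ≤ y)
      (hz : 0 ≤ z) : a * x + b * y + c * z ≤ (a + b + c) * (x + y + z) := by
    nlinarith [mul_nonneg ha hy, mul_nonneg ha hz, mul_nonneg hb hx, mul_nonneg hb hz,
      mul_nonneg hc hx, mul_nonneg hc hy]
  calc (2 * (A * |α|) * √(e / L) + 4 * B * √(e / L) ^ 2) / L + C * α ^ 2
      = 2 * A / (L * √L) * (|α| * √e) + C * α ^ 2 + 4 * B / L ^ 2 * e := by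
        rw [Real.sq_sqrt (by positivity), Real.sqrt_div he]
        field_simp
        ring
    _ ≤ _ := hsplit (by positivity) hC (by positivity) (by positivity) (by positivity) he

lemma exists_eventually_isQuadraticWell_displacement {P Q xc β₁ : ℝ → ℝ} {k ℓ D : ℝ}
    (hkℓ : k < ℓ) (hP : ContDiffAt ℝ 3 P 0) (hQ : ContDiffAt ℝ 3 Q 0)
    (hP2 : deriv (deriv P) 0 = 2 * ℓ) (hQ2 : deriv (deriv Q) 0 = 2 * k) (hD : 0 ≤ D)
    (hxc : ∀ᶠ α in 𝓝 0, |xc α| ≤ D * |α|) (hβ₁ : Tendsto β₁ (𝓝 0) (𝓝 0))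
    (hcrit : ∀ᶠ α in 𝓝 0, deriv (displacement P Q α (β₁ α)) (xc α) = 0) :
    ∃ δ > 0, ∃ A ≥ 0, ∃ B ≥ 0, ∀ᶠ p : ℝ × ℝ in 𝓝 (0, 0),
      IsQuadraticWell (displacement P Q p.1 p.2) (ℓ - k) (xc p.1) (Ioo (-δ) δ) ∧
      (∀ x ∈ Ioo (-δ) δ, |deriv (deriv (displacement P Q p.1 p.2)) x - 2 * (ℓ - k)| ≤
        A * |p.1| + B * |x - xc p.1|) ∧
      |xc p.1| < δ / 2 ∧ |p.2 - β₁ p.1| < (ℓ - k) / 2 * (δ / 2) ^ 2 := by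
  obtain ⟨δ, hδ, M, hM, hwell⟩ := exists_isQuadraticWell_displacement hkℓ hP hQ hP2 hQ2
  have hxc0 : Tendsto xc (𝓝 0) (𝓝 0) :=
    squeeze_zero_norm' hxc (by simpa using (continuous_abs.tendsto (0 : ℝ)).const_mul D)
  have hfst : Tendsto (fun p : ℝ × ℝ ↦ p.1) (𝓝 (0, 0)) (𝓝 0) := continuous_fst.tendsto _
  refine ⟨δ, hδ, M * (1 + D), by positivity, M, hM, ?_⟩
  filter_upwards [hfst.eventually hxc, hfst.eventually hcrit,
    eventually_abs_lt_of_tendsto_zero hxc0 hβ₁ hδ (half_pos hδ)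
      (mul_pos (half_pos (sub_pos.2 hkℓ)) (by positivity : 0 < (δ / 2) ^ 2))]
    with ⟨α, β⟩ hxcα hcritα ⟨hα, hc, hβ⟩
  obtain ⟨hw, hcurv⟩ := hwell α β (xc α) hα (hc.trans (half_lt_self hδ))
    (by rwa [deriv_displacement_eq β (β₁ α)])
  refine ⟨hw, fun x hx ↦ (hcurv x hx).trans ?_, hc, hβ⟩
  calc M * (|α| + |x|) ≤ M * (|α| + (|x - xc α| + D * |α|)) := by
        gcongr
        linarith [abs_sub_abs_le_abs_sub x (xc α)]
    _ = M * (1 + D) * |α| + M * |x - xc α| := by ring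

end Unfolding

theorem stmt_6_general {ℓ k L : ℝ} (hLdef : L = ℓ - k) (hLpos : 0 < L) {P Q : ℝ → ℝ}
    (hP : ContDiffAt ℝ 3 P 0) (hQ : ContDiffAt ℝ 3 Q 0)
    (hP2 : deriv (deriv P) 0 = 2 * ℓ) (hQ2 : deriv (deriv Q) 0 = 2 * k)
    {ε₀ : ℝ} (hε₀ : 0 < ε₀) {xc β₁ : ℝ → ℝ}
    (hasym : ∃ C > (0 : ℝ), ∀ α ∈ Ioo (-ε₀) ε₀,
      |xc α + (k / L) * α| ≤ C * α ^ 2 ∧ |β₁ α - (k * ℓ / L) * α ^ 2| ≤ C * |α| ^ 3)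
    (hdouble : ∀ α ∈ Ioo (-ε₀) ε₀,
      displacement P Q α (β₁ α) (xc α) = 0 ∧ deriv (displacement P Q α (β₁ α)) (xc α) = 0) :
    ∃ δ > (0 : ℝ), ∃ C > (0 : ℝ), ∃ U₁ ∈ 𝓝 ((0, 0) : ℝ × ℝ), ∀ α β : ℝ, (α, β) ∈ U₁ →
      (β₁ α < β → ∀ x ∈ Ioo (-δ) δ, displacement P Q α β x ≠ 0) ∧
      (β = β₁ α →
        (∀ x ∈ Ioo (-δ) δ, displacement P Q α β x = 0 ↔ x = xc α) ∧
        deriv (displacement P Q α β) (xc α) = 0 ∧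
        0 < deriv (deriv (displacement P Q α β)) (xc α)) ∧
      (β < β₁ α →
        ∃ xm xp : ℝ, xm < xp ∧ xm ∈ Ioo (-δ) δ ∧ xp ∈ Ioo (-δ) δ ∧
          (∀ x ∈ Ioo (-δ) δ, displacement P Q α β x = 0 ↔ x = xm ∨ x = xp) ∧
          deriv (displacement P Q α β) xm < 0 ∧ 0 < deriv (displacement P Q α β) xp ∧
          |xm - (-(k / L) * α - √(-(β - β₁ α) / L))| ≤
            C * (|α| * √(-(β - β₁ α)) + α ^ 2 + |β - β₁ α|) ∧
          |xp - (-(k / L) * α + √(-(β - β₁ α) / L))| ≤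
            C * (|α| * √(-(β - β₁ α)) + α ^ 2 + |β - β₁ α|)) := by
  obtain ⟨C₀, hC₀, hasym⟩ := hasym
  subst hLdef
  have hIoo : Ioo (-ε₀) ε₀ ∈ 𝓝 (0 : ℝ) := Ioo_mem_nhds (neg_neg_of_pos hε₀) hε₀
  have hxc : ∀ᶠ α in 𝓝 0, |xc α| ≤ (|k / (ℓ - k)| + C₀ * ε₀) * |α| := by
    filter_upwards [hIoo] with α hα
    exact abs_le_mul_abs_of_abs_add_mul_le hC₀.le (abs_lt.2 hα).le (hasym α hα).1
  have hβ₁ : Tendsto β₁ (𝓝 0) (𝓝 0) :=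
    tendsto_zero_of_abs_sub_le (Continuous.tendsto' (by fun_prop) _ _ (by simp))
      (Continuous.tendsto' (by fun_prop) _ _ (by simp))
      (eventually_of_mem hIoo fun α hα ↦ (hasym α hα).2)
  obtain ⟨δ, hδ, A, hA, B, hB, hwell⟩ := exists_eventually_isQuadraticWell_displacement
    (sub_pos.1 hLpos) hP hQ hP2 hQ2 (by positivity) hxc hβ₁
    (eventually_of_mem hIoo fun α hα ↦ (hdouble α hα).2)
  refine ⟨δ, hδ, 2 * A / ((ℓ - k) * √(ℓ - k)) + C₀ + 4 * B / (ℓ - k) ^ 2, by positivity, _,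
    hwell.and ((continuous_fst.tendsto (0, 0)).eventually hIoo), ?_⟩
  rintro α β ⟨⟨hw, hcurv, hc, hβ⟩, hα⟩
  have hval := displacement_eq_sub_of_eq_zero (hdouble α hα).1 β
  refine ⟨fun hlt x hx ↦ ?_, ?_, fun hlt ↦ ?_⟩
  · exact (by linarith [hw.apply_center_le hx] : 0 < displacement P Q α β x).ne'
  · rintro rfl
    exact ⟨fun x hx ↦ by rw [← hw.apply_eq_apply_center_iff hx, (hdouble α hα).1], hw.deriv_eq_zero,
      hw.deriv_deriv_pos hw.mem⟩
  · have hneg : displacement P Q α β (xc α) < 0 := by linarith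
    have hsub : Icc (xc α - δ / 2) (xc α + δ / 2) ⊆ Ioo (-δ) δ := fun x hx ↦
      ⟨by linarith [(abs_lt.1 hc).1, hx.1], by linarith [(abs_lt.1 hc).2, hx.2]⟩
    rw [← hval] at hβ ⊢
    refine hw.exists_two_simple_zeros (half_pos hδ).le hsub hneg ((neg_le_abs _).trans hβ.le)
      (by positivity) hB hcurv ?_
    rw [abs_of_neg hneg]
    refine (add_le_add_right ?_ _).trans
      (sqrt_error_add_le hLpos hA hB hC₀.le (neg_nonneg.2 hneg.le))
    simpa using (hasym α hα).1

/- STATEMENT 6: zeros of the displacement function f_{α,β}(x) = β + P(x) − Q(x − α)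
near the saddle-node curve β = β₁(α), assuming L = ℓ − k > 0:
(a) no zeros for β > β₁(α); (b) one double zero x* = x(α) with f' = 0, f'' > 0 for
β = β₁(α); (c) two simple zeros x⁻ < x⁺, f'(x⁻) < 0 < f'(x⁺), with
x^± = −(k/L)α ± √(−ε/L) + O(|α|√(−ε)) + O(α²) + O(|ε|), ε = β − β₁(α) < 0. -/
theorem stmt_6 (ℓ k L : ℝ) (hℓ : ℓ < 0) (hk : k < 0) (hLdef : L = ℓ - k) (hLpos : 0 < L)
    (P Q : ℝ → ℝ)
    (hP : ContDiffAt ℝ 3 P 0) (hQ : ContDiffAt ℝ 3 Q 0)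
    (hP0 : P 0 = 0) (hP1 : deriv P 0 = 0) (hP2 : deriv (deriv P) 0 = 2 * ℓ)
    (hQ0 : Q 0 = 0) (hQ1 : deriv Q 0 = 0) (hQ2 : deriv (deriv Q) 0 = 2 * k)
    (ε₀ : ℝ) (hε₀ : 0 < ε₀) (xc β₁ : ℝ → ℝ)
    (hxc : ContDiffOn ℝ 1 xc (Set.Ioo (-ε₀) ε₀))
    (hβ₁ : ContDiffOn ℝ 1 β₁ (Set.Ioo (-ε₀) ε₀))
    (hasym : ∃ C > (0 : ℝ), ∀ α ∈ Set.Ioo (-ε₀) ε₀,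
      |xc α + (k / L) * α| ≤ C * α ^ 2 ∧ |β₁ α - (k * ℓ / L) * α ^ 2| ≤ C * |α| ^ 3)
    (hdouble : ∀ α ∈ Set.Ioo (-ε₀) ε₀,
      β₁ α + P (xc α) - Q (xc α - α) = 0 ∧
      deriv (fun x => β₁ α + P x - Q (x - α)) (xc α) = 0) :
    ∃ δ > (0 : ℝ), ∃ C > (0 : ℝ), ∃ U₁ ∈ nhds (((0 : ℝ), (0 : ℝ)) : ℝ × ℝ),
      ∀ α β : ℝ, (α, β) ∈ U₁ →
        -- (a)
        ((β₁ α < β → ∀ x ∈ Set.Ioo (-δ) δ, β + P x - Q (x - α) ≠ 0) ∧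
        -- (b)
         (β = β₁ α →
            (∀ x ∈ Set.Ioo (-δ) δ, (β + P x - Q (x - α) = 0 ↔ x = xc α)) ∧
            deriv (fun y => β + P y - Q (y - α)) (xc α) = 0 ∧
            0 < deriv (deriv (fun y => β + P y - Q (y - α))) (xc α)) ∧
        -- (c)
         (β < β₁ α →
            ∃ xm xp : ℝ, xm < xp ∧ xm ∈ Set.Ioo (-δ) δ ∧ xp ∈ Set.Ioo (-δ) δ ∧
              (∀ x ∈ Set.Ioo (-δ) δ,
                (β + P x - Q (x - α) = 0 ↔ (x = xm ∨ x = xp))) ∧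
              deriv (fun y => β + P y - Q (y - α)) xm < 0 ∧
              0 < deriv (fun y => β + P y - Q (y - α)) xp ∧
              |xm - (-(k / L) * α - Real.sqrt (-(β - β₁ α) / L))|
                ≤ C * (|α| * Real.sqrt (-(β - β₁ α)) + α ^ 2 + |β - β₁ α|) ∧
              |xp - (-(k / L) * α + Real.sqrt (-(β - β₁ α) / L))|
                ≤ C * (|α| * Real.sqrt (-(β - β₁ α)) + α ^ 2 + |β - β₁ α|))) :=
  stmt_6_general hLdef hLpos hP hQ hP2 hQ2 hε₀ hasym hdouble
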